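/- arXiv:1108.3571 — 4 statements merged into one kernel-verified Lean document; each statement's English description precedes it below -/
import Mathlib

section
/- Let M ≥ 3 be an integer, P > 0, and s ∈ (0, 1]. Set u = s² − 2s + 4, α = 3s²/(4u), and λ = ( M·u/(6(M−1)) + (M−2)/(2(M−1)) )⁻¹. Then the three quantities λMPu/(12(M−1)), s²λMP/(16(M−1)α), and (P/2)·(1 − (M−2)λ/(2(M−1))) are all equal, and their common value is (P/2)·(1 − 3(M−2)/(M·u + 3(M−2))). -/
/-! Put `D = M u + 3 (M - 2)`. Over the common denominator `6 (M - 1)` the bracket defining `lam`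
is `D / (6 (M - 1))`, so `lam = 6 (M - 1) / D`, and the choice of `α` makes `s² / (16 α) = u / 12`.
Hence all three exponents equal `M P u / (2 D)`. The denominators do not vanish because
`u = (s - 1)² + 3 > 0` and `M ≥ 3`. -/

/-- Equalization of the three error exponents of the two-stage noisy feedback coding
scheme for an `M`-ary message: with `u = s² − 2s + 4`, `α = 3s²/(4u)` and
`λ = (Mu/(6(M−1)) + (M−2)/(2(M−1)))⁻¹`, the three exponents `λMPu/(12(M−1))`,
`s²λMP/(16(M−1)α)`, and `(P/2)(1 − (M−2)λ/(2(M−1)))` coincide, with common value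
`(P/2)(1 − 3(M−2)/(Mu + 3(M−2)))`. -/
theorem two_stage_exponents_equal_general (M : ℕ) (hM : 3 ≤ M) (P s u α lam : ℝ)
    (hP : 0 < P) (hs0 : 0 < s) (hs1 : s ≤ 1)
    (hu : u = s ^ 2 - 2 * s + 4)
    (hα : α = 3 * s ^ 2 / (4 * u))
    (hlam : lam = ((M : ℝ) * u / (6 * ((M : ℝ) - 1))
      + ((M : ℝ) - 2) / (2 * ((M : ℝ) - 1)))⁻¹) :
    lam * M * P * u / (12 * ((M : ℝ) - 1)) = s ^ 2 * lam * M * P / (16 * ((M : ℝ) - 1) * α)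
      ∧ s ^ 2 * lam * M * P / (16 * ((M : ℝ) - 1) * α)
          = P / 2 * (1 - ((M : ℝ) - 2) * lam / (2 * ((M : ℝ) - 1)))
      ∧ P / 2 * (1 - ((M : ℝ) - 2) * lam / (2 * ((M : ℝ) - 1)))
          = P / 2 * (1 - 3 * ((M : ℝ) - 2) / ((M : ℝ) * u + 3 * ((M : ℝ) - 2))) := by
  have hm : (3 : ℝ) ≤ (M : ℝ) := by exact_mod_cast hM
  generalize (M : ℝ) = m at *
  have hu0 : 0 < u := by nlinarith [sq_nonneg (s - 1)]
  have hm1 : m - 1 ≠ 0 := by linarith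
  have hD : m * u + 3 * (m - 2) ≠ 0 := by nlinarith [mul_pos (by linarith : 0 < m) hu0]
  have hl : lam = 6 * (m - 1) / (m * u + 3 * (m - 2)) := by
    have hb : m * u / (6 * (m - 1)) + (m - 2) / (2 * (m - 1))
        = (m * u + 3 * (m - 2)) / (6 * (m - 1)) := by
      field_simp
      ring
    rw [hlam, hb, inv_div]
  have hs : s ≠ 0 := hs0.ne'
  have hu1 : u ≠ 0 := hu0.ne'
  -- `u` stays an atom below: its value in terms of `s` matters only for positivity.
  clear hu hlam
  have e1 : lam * m * P * u / (12 * (m - 1)) = m * P * u / (2 * (m * u + 3 * (m - 2))) := by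
    rw [hl]
    field_simp
    ring
  have e2 : s ^ 2 * lam * m * P / (16 * (m - 1) * α) = lam * m * P * u / (12 * (m - 1)) := by
    rw [hα]
    field_simp
    ring
  have e3 : (m - 2) * lam / (2 * (m - 1)) = 3 * (m - 2) / (m * u + 3 * (m - 2)) := by
    rw [hl]
    field_simp
    ring
  refine ⟨e2.symm, ?_, by rw [e3]⟩
  rw [e2, e1, e3]
  field_simp
  ring
end

section
/- Let M ≥ 3 be an integer, P > 0, and define φ(s) = (P/2)·(1 − 3(M−2)/(M(s² − 2s + 4) + 3(M−2))) for s ∈ [0, 1]. Then for every s ∈ [0, 1), φ(s) > M·P/(4(M−1)). -/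
/-!
With `q = s² − 2s + 4 = 3 + (s − 1)²`, the scheme's exponent is `(P/2) · Mq / (Mq + 3(M − 2))`,
which is strictly increasing in `q` and equals `MP / (4(M − 1))` at `q = 3`, i.e. at `s = 1`.
The proof below writes the gap between the two exponents in closed form, as
`PM(M − 2)(s − 1)²` over a positive denominator; it is positive since `M > 2` and `s ≠ 1`.
-/

/-- The two-stage scheme beats the nonfeedback exponent: for `M ≥ 3`, `P > 0`, and
`φ(s) = (P/2)(1 − 3(M−2)/(M(s² − 2s + 4) + 3(M−2)))`, every `s ∈ [0, 1)` satisfies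
`φ(s) > MP/(4(M−1))` (Shannon's best nonfeedback exponent for `M` messages). -/
theorem two_stage_beats_nonfeedback (M : ℕ) (hM : 3 ≤ M) (P : ℝ) (hP : 0 < P) :
    ∀ s : ℝ, 0 ≤ s → s < 1 →
      P / 2 * (1 - 3 * ((M : ℝ) - 2)
          / ((M : ℝ) * (s ^ 2 - 2 * s + 4) + 3 * ((M : ℝ) - 2)))
        > (M : ℝ) * P / (4 * ((M : ℝ) - 1)) := by
  intro s _ hs
  have hm : (3 : ℝ) ≤ M := by exact_mod_cast hM
  have hq : 0 < (s - 1) ^ 2 := by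
    have : s - 1 ≠ 0 := by linarith
    positivity
  have h1 : 0 < (M : ℝ) - 1 := by linarith
  have h2 : 0 < (M : ℝ) - 2 := by linarith
  have hD : 0 < (M : ℝ) * (s ^ 2 - 2 * s + 4) + 3 * ((M : ℝ) - 2) := by
    have : 0 < s ^ 2 - 2 * s + 4 := by nlinarith
    positivity
  have key : P / 2 * (1 - 3 * ((M : ℝ) - 2)
          / ((M : ℝ) * (s ^ 2 - 2 * s + 4) + 3 * ((M : ℝ) - 2)))
        - (M : ℝ) * P / (4 * ((M : ℝ) - 1))
      = P * M * ((M : ℝ) - 2) * (s - 1) ^ 2 / (4 * ((M : ℝ) - 1)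
          * ((M : ℝ) * (s ^ 2 - 2 * s + 4) + 3 * ((M : ℝ) - 2))) := by
    have hD' := hD.ne'
    have h1' := h1.ne'
    -- `field_simp` rewrites the compound denominator into a form that no longer matches
    -- `hD'`, so it is treated as an atom `D` while fractions are cleared.
    generalize hE : (M : ℝ) * (s ^ 2 - 2 * s + 4) + 3 * ((M : ℝ) - 2) = D at hD' ⊢
    field_simp
    rw [← hE]
    ring
  have : 0 < P * M * ((M : ℝ) - 2) * (s - 1) ^ 2 / (4 * ((M : ℝ) - 1)
          * ((M : ℝ) * (s ^ 2 - 2 * s + 4) + 3 * ((M : ℝ) - 2))) := by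
    positivity
  linarith
end

section
/- Let M ≥ 3 be an integer, P > 0, and let α ∈ (0, 1/4). Then there exists s ∈ (0, 1) such that 3s²/(4(s² − 2s + 4)) = α and (P/2)·(1 − 3(M−2)/(M(s² − 2s + 4) + 3(M−2))) > M·P/(4(M−1)). -/
/-!
Put `q = s² − 2s + 4 = (s − 1)² + 3`. The map `s ↦ 3s²/(4q)` is continuous with value `0` at `s = 0`
and `1/4` at `s = 1`, so the intermediate value theorem yields `s ∈ (0, 1)` with value `α`.
The achieved exponent is `(P/2) · Mq/(Mq + 3(M − 2))`, which is strictly increasing in `q` and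
equals the nonfeedback exponent at `q = 3`, i.e. at `s = 1`; since `s < 1` forces `q > 3`,
the inequality is strict.
-/

/-- Corollary 1 of the paper: for every `M ≥ 3`, `P > 0`, and feedback noise power
`α ∈ (0, 1/4)`, there is a signal-protection parameter `s ∈ (0, 1)` with
`α*(s) = 3s²/(4(s² − 2s + 4)) = α` for which the two-stage scheme's exponent
`(P/2)(1 − 3(M−2)/(M(s² − 2s + 4) + 3(M−2)))` strictly exceeds Shannon's
nonfeedback exponent `MP/(4(M−1))`. -/
theorem noisy_feedback_beats_nonfeedback (M : ℕ) (hM : 3 ≤ M) (P : ℝ) (hP : 0 < P)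
    (α : ℝ) (hα0 : 0 < α) (hα1 : α < 1 / 4) :
    ∃ s : ℝ, 0 < s ∧ s < 1 ∧ 3 * s ^ 2 / (4 * (s ^ 2 - 2 * s + 4)) = α
      ∧ P / 2 * (1 - 3 * ((M : ℝ) - 2)
            / ((M : ℝ) * (s ^ 2 - 2 * s + 4) + 3 * ((M : ℝ) - 2)))
          > (M : ℝ) * P / (4 * ((M : ℝ) - 1)) := by
  have hq : ∀ s : ℝ, 0 < s ^ 2 - 2 * s + 4 := fun s => by nlinarith [sq_nonneg (s - 1)]
  have hcont : ContinuousOn (fun s : ℝ => 3 * s ^ 2 / (4 * (s ^ 2 - 2 * s + 4))) (Set.Icc 0 1) := by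
    refine ContinuousOn.div (by fun_prop) (by fun_prop) fun s _ => ?_
    have := hq s
    positivity
  obtain ⟨s, ⟨hs0, hs1⟩, hs⟩ := intermediate_value_Ioo zero_le_one hcont
    (show α ∈ Set.Ioo _ _ from ⟨by norm_num; exact hα0, by norm_num; linarith⟩)
  refine ⟨s, hs0, hs1, hs, ?_⟩
  have hM' : (3 : ℝ) ≤ M := by exact_mod_cast hM
  have hq3 : 3 < s ^ 2 - 2 * s + 4 := by nlinarith
  generalize s ^ 2 - 2 * s + 4 = q at hq3
  generalize (M : ℝ) = m at hM'
  have hm2 : 0 < m - 2 := by linarith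
  have hm1 : 0 < m - 1 := by linarith
  have hm : 0 < m := by linarith
  have hD : 0 < m * q + 3 * (m - 2) := by
    have : 0 < q := by linarith
    positivity
  -- Over a common denominator, the gap between the exponents is a positive multiple of `q - 3`.
  have key : P / 2 * (1 - 3 * (m - 2) / (m * q + 3 * (m - 2))) - m * P / (4 * (m - 1))
      = P * m * (m - 2) * (q - 3) / (4 * (m - 1) * (m * q + 3 * (m - 2))) := by
    have h1 := hm1.ne'
    have h2 := hD.ne'
    field_simp
    ring
  have hpos : 0 < P * m * (m - 2) * (q - 3) / (4 * (m - 1) * (m * q + 3 * (m - 2))) := by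
    have : 0 < q - 3 := by linarith
    positivity
  linarith
end

section
/- Let P > 0 and let L ≥ 1 be an integer. For each integer n ≥ 2, set δ_n = ln(4nL²)/(2√n). Then the sequence P·(1+δ_n)^{2(√n − 1)}/(8nL²) tends to P/2 as n → ∞, and the sequence P/(2(1+δ_n)²) also tends to P/2 as n → ∞; consequently min{ P·(1+δ_n)^{2(√n − 1)}/(8nL²), P/(2(1+δ_n)²) } tends to P/2 as n → ∞. -/
/-!
Write `s = √n`, `x = 4nL²` and `δ = log x / (2s)`. Then `δ → 0`, which settles the second sequence.
Since `8nL² = 2x` and `log x = 2sδ`, the first sequence equals `(P / 2) * exp E` with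
`E = 2(s - 1) log (1 + δ) - 2sδ = 2s (log (1 + δ) - δ) - 2 log (1 + δ)`.
From `δ - δ² ≤ log (1 + δ) ≤ δ` for `δ ≥ 0`, it follows that `-(2sδ² + 2δ) ≤ E ≤ 0`, and `sδ² → 0`
because `sδ²` is a constant times `log² y / y` with `y = √x = 2L√n`.
-/

open Filter Topology

lemma sub_sq_le_log_one_add {d : ℝ} (hd : 0 ≤ d) : d - d ^ 2 ≤ Real.log (1 + d) := by
  have h := Real.one_sub_inv_le_log_of_pos (by linarith : 0 < 1 + d)
  refine le_trans ?_ h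
  have h2 : 1 - (1 + d)⁻¹ - (d - d ^ 2) = d ^ 3 / (1 + d) := by
    field_simp
    ring
  have : 0 ≤ d ^ 3 / (1 + d) := by positivity
  linarith

/-- The substitution `y = 2L√n`, which gives `4nL² = y²`, turns powers of `log (4nL²)` over `√n` into
powers of `log y` over `y`. -/
lemma tendsto_log_pow_div_sqrt (L : ℕ) (hL : 1 ≤ L) (k : ℕ) :
    Tendsto (fun n : ℕ => Real.log (4 * n * (L : ℝ) ^ 2) ^ k / Real.sqrt n) atTop (𝓝 0) := by
  have hL0 : (0 : ℝ) < L := by exact_mod_cast hL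
  have hy : Tendsto (fun n : ℕ => 2 * (L : ℝ) * Real.sqrt n) atTop atTop :=
    (Real.tendsto_sqrt_atTop.comp tendsto_natCast_atTop_atTop).const_mul_atTop (by positivity)
  have h := ((Real.isLittleO_pow_log_id_atTop (n := k)).tendsto_div_nhds_zero.comp hy).const_mul
    (2 ^ k * (2 * (L : ℝ)))
  rw [mul_zero] at h
  refine h.congr' ?_
  filter_upwards [eventually_ge_atTop 1] with n hn
  have hs : 0 < Real.sqrt n := Real.sqrt_pos.2 (by exact_mod_cast hn)
  have hx : 4 * n * (L : ℝ) ^ 2 = (2 * L * Real.sqrt n) ^ 2 := by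
    rw [mul_pow, Real.sq_sqrt (Nat.cast_nonneg n)]
    ring
  simp only [Function.comp, id]
  rw [hx, Real.log_pow, mul_pow]
  push_cast
  field_simp

/-- In Pinsker's linear noise-free feedback scheme with `δ_n = ln(4nL²)/(2√n)`, both
error-exponent sequences `P·(1+δ_n)^{2(√n − 1)}/(8nL²)` and `P/(2(1+δ_n)²)` tend to
`P/2` as `n → ∞`, and hence so does their minimum (powers are real powers). -/
theorem pinsker_exponents_tendsto (P : ℝ) (hP : 0 < P) (L : ℕ) (hL : 1 ≤ L) :
    Tendsto
        (fun n : ℕ => P * (1 + Real.log (4 * n * (L : ℝ) ^ 2) / (2 * Real.sqrt n))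
            ^ (2 * (Real.sqrt n - 1) : ℝ) / (8 * n * (L : ℝ) ^ 2))
        atTop (nhds (P / 2))
      ∧ Tendsto
          (fun n : ℕ =>
            P / (2 * (1 + Real.log (4 * n * (L : ℝ) ^ 2) / (2 * Real.sqrt n)) ^ 2))
          atTop (nhds (P / 2))
      ∧ Tendsto
          (fun n : ℕ =>
            min (P * (1 + Real.log (4 * n * (L : ℝ) ^ 2) / (2 * Real.sqrt n))
                ^ (2 * (Real.sqrt n - 1) : ℝ) / (8 * n * (L : ℝ) ^ 2))
              (P / (2 * (1 + Real.log (4 * n * (L : ℝ) ^ 2) / (2 * Real.sqrt n)) ^ 2)))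
          atTop (nhds (P / 2)) := by
  have hL1 : (1 : ℝ) ≤ L := by exact_mod_cast hL
  have hδ : Tendsto (fun n : ℕ => Real.log (4 * n * (L : ℝ) ^ 2) / (2 * Real.sqrt n))
      atTop (𝓝 0) := by
    have h := (tendsto_log_pow_div_sqrt L hL 1).const_mul (1 / 2)
    rw [mul_zero] at h
    refine h.congr fun n => ?_
    rw [pow_one, div_mul_div_comm, one_mul]
  have h2 : Tendsto
      (fun n : ℕ => P / (2 * (1 + Real.log (4 * n * (L : ℝ) ^ 2) / (2 * Real.sqrt n)) ^ 2))
      atTop (𝓝 (P / 2)) := by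
    have h := (tendsto_const_nhds (x := P)).div (((hδ.const_add 1).pow 2).const_mul 2) (by norm_num)
    rw [add_zero, one_pow, mul_one] at h
    exact h
  have hE : Tendsto (fun n : ℕ =>
      Real.log (1 + Real.log (4 * n * (L : ℝ) ^ 2) / (2 * Real.sqrt n)) * (2 * (Real.sqrt n - 1))
        - Real.log (4 * n * (L : ℝ) ^ 2)) atTop (𝓝 0) := by
    -- `2sδ² = log² x / (2s)`, so the lower bound is `-(2sδ² + 2δ)`.
    have hlow : Tendsto (fun n : ℕ =>
        -(1 / 2 * (Real.log (4 * n * (L : ℝ) ^ 2) ^ 2 / Real.sqrt n)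
          + 2 * (Real.log (4 * n * (L : ℝ) ^ 2) / (2 * Real.sqrt n)))) atTop (𝓝 0) := by
      have h := (((tendsto_log_pow_div_sqrt L hL 2).const_mul (1 / 2)).add (hδ.const_mul 2)).neg
      rw [mul_zero, mul_zero, add_zero, neg_zero] at h
      exact h
    refine tendsto_of_tendsto_of_tendsto_of_le_of_le' hlow tendsto_const_nhds ?_ ?_
    all_goals
      filter_upwards [eventually_ge_atTop 1] with n hn
      have hn1 : (1 : ℝ) ≤ n := by exact_mod_cast hn
      have hs : 1 ≤ Real.sqrt n := Real.one_le_sqrt.2 hn1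
      have hl : 0 ≤ Real.log (4 * n * (L : ℝ) ^ 2) :=
        Real.log_nonneg (by nlinarith [one_le_pow₀ hL1 (n := 2)])
      set s := Real.sqrt n
      set l := Real.log (4 * n * (L : ℝ) ^ 2)
      obtain ⟨d, hd⟩ : ∃ d, d = l / (2 * s) := ⟨_, rfl⟩
      have hd0 : 0 ≤ d := by rw [hd]; positivity
      have hld : l = 2 * s * d := by rw [hd]; field_simp
      have hlo := sub_sq_le_log_one_add hd0
      have hup : Real.log (1 + d) ≤ d := by
        linarith [Real.log_le_sub_one_of_pos (by linarith : 0 < 1 + d)]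
      have hq : l ^ 2 / s = 4 * s * d ^ 2 := by rw [hld]; field_simp; ring
      rw [← hd]
    · rw [hq, hld]
      nlinarith [mul_le_mul_of_nonneg_left hlo (by linarith : 0 ≤ 2 * s)]
    · rw [hld]
      nlinarith [mul_le_mul_of_nonneg_left hup (by linarith : 0 ≤ 2 * (s - 1))]
  have h1 : Tendsto
      (fun n : ℕ => P * (1 + Real.log (4 * n * (L : ℝ) ^ 2) / (2 * Real.sqrt n))
          ^ (2 * (Real.sqrt n - 1) : ℝ) / (8 * n * (L : ℝ) ^ 2))
      atTop (𝓝 (P / 2)) := by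
    have h := ((Real.continuous_exp.tendsto 0).comp hE).const_mul (P / 2)
    rw [Real.exp_zero, mul_one] at h
    refine h.congr' ?_
    filter_upwards [eventually_ge_atTop 1] with n hn
    have hn1 : (1 : ℝ) ≤ n := by exact_mod_cast hn
    have hl : 0 ≤ Real.log (4 * n * (L : ℝ) ^ 2) :=
      Real.log_nonneg (by nlinarith [one_le_pow₀ hL1 (n := 2)])
    have hx : 0 < 4 * n * (L : ℝ) ^ 2 := by positivity
    have hb : 0 < 1 + Real.log (4 * n * (L : ℝ) ^ 2) / (2 * Real.sqrt n) := by positivity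
    simp only [Function.comp]
    rw [Real.exp_sub, Real.exp_log hx, Real.rpow_def_of_pos hb]
    field_simp
    ring
  exact ⟨h1, h2, by simpa using h1.min h2⟩
end
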